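/- Let n ≥ 4, d ≥ 1, and let H¹,...,Hᵈ be hermitian n × n complex matrices such that for every ξ ∈ ℝᵈ \ {0} the hermitian matrix ∑_{ℓ=1}^d ξ_ℓ Hℓ has at least 2 positive eigenvalues and at least 2 negative eigenvalues. On ℂⁿ × ℝᵈ with coordinates (z, x) consider the vector fields L̄_j = ∂/∂z̄_j − i ∑_{ℓ=1}^d ∑_{k=1}^n (Hℓ)_{kj} z_k ∂/∂x_ℓ, j = 1,...,n. Then for every smooth compactly supported u : ℂⁿ × ℝᵈ → ℂ, ∫_{ℂⁿ×ℝᵈ} |u|² e^{|z|²} dλ ≤ ∑_{j=1}^n ∫_{ℂⁿ×ℝᵈ} |L̄_j u|² e^{|z|²} dλ. -/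

import Mathlib

/-!
The partial Fourier transform in `x` turns `L̄_j` into `D_j = ∂/∂z̄_j + (zᵀA)_j` on the fibre over
the frequency `ξ`, where `A = 2π ∑ ξ_ℓ Hℓ`. By Plancherel it suffices to prove
`∫ |G|² e^{|z|²} ≤ ∑ ∫ |D_j G|² e^{|z|²}` on every fibre.

Choose `c ≠ 0` with `c* A c ≤ 0`, for instance an eigenvector of `A` with a negative eigenvalue, and
put `D = ∑ c_j D_j`. In the space with weight `e^{|z|²}`, integration by parts gives
`∫ |D G|² e^{|z|²} = ∫ |D* G|² e^{|z|²} + ∫ [D*, D] |G|² e^{|z|²}`, where `[D*, D]` is the constant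
`|c|² - 2 Re (c* A c) ≥ |c|²`. Cauchy–Schwarz bounds `|D G|²` by `|c|² ∑ |D_j G|²`.
-/

open MeasureTheory Complex Finset

noncomputable section

/-- Wirtinger derivative `∂u/∂z̄_j` in the `z` variables on `ℂⁿ × ℝᵈ`. -/
def wbarQ {n d : ℕ} (j : Fin n) (u : (Fin n → ℂ) × (Fin d → ℝ) → ℂ)
    (p : (Fin n → ℂ) × (Fin d → ℝ)) : ℂ :=
  (1 / 2 : ℂ) * (fderiv ℝ u p (Pi.single j 1, 0)
    + Complex.I * fderiv ℝ u p (Pi.single j Complex.I, 0))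

/-- Wirtinger derivative `∂u/∂z_j` in the `z` variables on `ℂⁿ × ℝᵈ`. -/
def wholQ {n d : ℕ} (j : Fin n) (u : (Fin n → ℂ) × (Fin d → ℝ) → ℂ)
    (p : (Fin n → ℂ) × (Fin d → ℝ)) : ℂ :=
  (1 / 2 : ℂ) * (fderiv ℝ u p (Pi.single j 1, 0)
    - Complex.I * fderiv ℝ u p (Pi.single j Complex.I, 0))

/-- The derivative `∂u/∂x_ℓ` in the real variables on `ℂⁿ × ℝᵈ`. -/
def dxQ {n d : ℕ} (ℓ : Fin d) (u : (Fin n → ℂ) × (Fin d → ℝ) → ℂ)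
    (p : (Fin n → ℂ) × (Fin d → ℝ)) : ℂ :=
  fderiv ℝ u p (0, Pi.single ℓ 1)

/-- The vector field `L̄_j = ∂/∂z̄_j − i ∑_ℓ ∑_k (Hℓ)_{kj} z_k ∂/∂x_ℓ`. -/
def LbarQ {n d : ℕ} (H : Fin d → Matrix (Fin n) (Fin n) ℂ) (j : Fin n)
    (u : (Fin n → ℂ) × (Fin d → ℝ) → ℂ) (p : (Fin n → ℂ) × (Fin d → ℝ)) : ℂ :=
  wbarQ j u p - Complex.I * ∑ ℓ, ∑ k, H ℓ k j * p.1 k * dxQ ℓ u p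

/-- The vector field `L_j = ∂/∂z_j + i ∑_ℓ ∑_k (Hℓ)_{jk} z̄_k ∂/∂x_ℓ`. -/
def LholQ {n d : ℕ} (H : Fin d → Matrix (Fin n) (Fin n) ℂ) (j : Fin n)
    (u : (Fin n → ℂ) × (Fin d → ℝ) → ℂ) (p : (Fin n → ℂ) × (Fin d → ℝ)) : ℂ :=
  wholQ j u p + Complex.I * ∑ ℓ, ∑ k, H ℓ j k * (starRingEnd ℂ) (p.1 k) * dxQ ℓ u p

/-- The weight `e^{|z|²}`. -/
def wgtQ {n d : ℕ} (p : (Fin n → ℂ) × (Fin d → ℝ)) : ℝ :=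
  Real.exp (∑ j, Complex.normSq (p.1 j))

/-- `M` is 2-pseudoconcave: for every `ξ ≠ 0`, the hermitian matrix `∑ ℓ, ξ_ℓ Hℓ`
has at least 2 positive and at least 2 negative eigenvalues (with multiplicity). -/
def TwoPseudoconcave {n d : ℕ} (H : Fin d → Matrix (Fin n) (Fin n) ℂ) : Prop :=
  ∀ ξ : Fin d → ℝ, ξ ≠ 0 →
    ∀ h : (∑ ℓ, ((ξ ℓ : ℂ)) • H ℓ).IsHermitian,
      2 ≤ (Finset.univ.filter fun i => 0 < h.eigenvalues i).card ∧
      2 ≤ (Finset.univ.filter fun i => h.eigenvalues i < 0).card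

open scoped ContDiff FourierTransform InnerProductSpace Matrix

section IntegrationByParts

variable {V F G W : Type*} [NormedAddCommGroup V] [NormedSpace ℝ V]
  [NormedAddCommGroup F] [NormedSpace ℝ F]

theorem fderiv_fderiv_apply_comm {f : V → F} (hf : ContDiff ℝ 2 f) (x a b : V) :
    fderiv ℝ (fun y => fderiv ℝ f y a) x b = fderiv ℝ (fun y => fderiv ℝ f y b) x a := by
  have hf' : DifferentiableAt ℝ (fderiv ℝ f) x :=
    (hf.fderiv_right (m := 1) (by norm_num)).differentiable one_ne_zero x
  simpa [fderiv_clm_apply hf' (differentiableAt_const _)]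
    using hf.contDiffAt.isSymmSndFDerivAt (by simp) b a

variable [FiniteDimensional ℝ V] [MeasurableSpace V] [BorelSpace V] {μ : Measure V}
  [μ.IsAddHaarMeasure] [NormedAddCommGroup G] [NormedSpace ℝ G] [NormedAddCommGroup W]
  [NormedSpace ℝ W]

theorem integral_bilin_fderiv_right_eq_neg_left_of_hasCompactSupport (B : F →L[ℝ] G →L[ℝ] W)
    {f : V → F} {g : V → G} (hf : ContDiff ℝ 1 f) (hg : ContDiff ℝ 1 g)
    (hgs : HasCompactSupport g) (v : V) :
    ∫ x, B (f x) (fderiv ℝ g x v) ∂μ = -∫ x, B (fderiv ℝ f x v) (g x) ∂μ := by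
  have hf' : Continuous fun x => fderiv ℝ f x v :=
    (hf.continuous_fderiv one_ne_zero).clm_apply continuous_const
  have hg' : Continuous fun x => fderiv ℝ g x v :=
    (hg.continuous_fderiv one_ne_zero).clm_apply continuous_const
  have integrable_bilin {p : V → F} {q : V → G} (hp : Continuous p) (hq : Continuous q)
      (hqs : HasCompactSupport q) : Integrable (fun x => B (p x) (q x)) μ :=
    (B.continuous₂.comp (hp.prodMk hq)).integrable_of_hasCompactSupport <|
      .intro hqs.isCompact fun x hx => by simp [image_eq_zero_of_notMem_tsupport hx]
  exact integral_bilinear_fderiv_right_eq_neg_left_of_integrable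
    (integrable_bilin hf' hg.continuous hgs)
    (integrable_bilin hf.continuous hg' (hgs.fderiv_apply ℝ v))
    (integrable_bilin hf.continuous hg.continuous hgs)
    (fun x _ => hf.differentiable one_ne_zero x) (fun x _ => hg.differentiable one_ne_zero x)

theorem integral_bilin_fderiv_fderiv_comm (B : F →L[ℝ] G →L[ℝ] W) {f : V → F} {g : V → G}
    (hf : ContDiff ℝ 2 f) (hg : ContDiff ℝ 1 g) (hgs : HasCompactSupport g) (a b : V) :
    ∫ x, B (fderiv ℝ f x a) (fderiv ℝ g x b) ∂μ
      = ∫ x, B (fderiv ℝ f x b) (fderiv ℝ g x a) ∂μ := by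
  have hf' (v : V) : ContDiff ℝ 1 fun x => fderiv ℝ f x v :=
    (hf.fderiv_right (by norm_num)).clm_apply contDiff_const
  simp_rw [integral_bilin_fderiv_right_eq_neg_left_of_hasCompactSupport B (hf' _) hg hgs,
    fderiv_fderiv_apply_comm hf _ a b]

theorem integral_mul_inner_fderiv {F : Type*} [NormedAddCommGroup F] [InnerProductSpace ℝ F]
    {α : V → ℝ} {g : V → F} (hα : ContDiff ℝ 1 α) (hg : ContDiff ℝ 1 g)
    (hgs : HasCompactSupport g) (v : V) :
    ∫ x, α x * (2 * ⟪g x, fderiv ℝ g x v⟫_ℝ) ∂μ = -∫ x, fderiv ℝ α x v * ‖g x‖ ^ 2 ∂μ := by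
  have fderiv_normSq (x : V) :
      fderiv ℝ (fun y => ‖g y‖ ^ 2) x v = 2 * ⟪g x, fderiv ℝ g x v⟫_ℝ := by
    simp [(hg.differentiable one_ne_zero x).hasFDerivAt.norm_sq.fderiv]
  have hgs' : HasCompactSupport fun x => ‖g x‖ ^ 2 :=
    hgs.comp_left (g := fun w => ‖w‖ ^ 2) (by simp)
  simpa [fderiv_normSq] using integral_bilin_fderiv_right_eq_neg_left_of_hasCompactSupport
    (μ := μ) (.mul ℝ ℝ) hα (hg.norm_sq ℝ) hgs' v

end IntegrationByParts

section Wirtinger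

variable {V : Type*} [NormedAddCommGroup V] [NormedSpace ℝ V]

/-- The Wirtinger derivative `½ (∂_a + i ∂_b)`, for a pair of real directions `a`, `b` that play the
roles of `∂/∂x` and `∂/∂y`. -/
def wirtingerBar (a b : V) (f : V → ℂ) (x : V) : ℂ :=
  1 / 2 * (fderiv ℝ f x a + I * fderiv ℝ f x b)

/-- The conjugate Wirtinger derivative `½ (∂_a - i ∂_b)`. -/
def wirtingerHol (a b : V) (f : V → ℂ) (x : V) : ℂ :=
  1 / 2 * (fderiv ℝ f x a - I * fderiv ℝ f x b)

theorem norm_sq_wirtingerBar_sub_mul (a b : V) (f : V → ℂ) (s : ℂ) (x : V) :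
    ‖wirtingerBar a b f x - s * f x‖ ^ 2
      = ‖wirtingerHol a b f x + starRingEnd ℂ s * f x‖ ^ 2
        + ⟪fderiv ℝ f x a, I * fderiv ℝ f x b⟫_ℝ
        - (s.re * (2 * ⟪f x, fderiv ℝ f x a⟫_ℝ) + s.im * (2 * ⟪f x, fderiv ℝ f x b⟫_ℝ)) := by
  simp only [wirtingerBar, wirtingerHol, ← normSq_eq_norm_sq, normSq_apply, Complex.inner,
    one_div, add_re, add_im, sub_re, sub_im, mul_re, mul_im, conj_re, conj_im, I_re, I_im, inv_re,
    inv_im, re_ofNat, im_ofNat]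
  ring

theorem hasCompactSupport_wirtingerBar {f : V → ℂ} (hf : HasCompactSupport f) (a b : V) :
    HasCompactSupport (wirtingerBar a b f) :=
  ((hf.fderiv_apply ℝ a).add (hf.fderiv_apply ℝ b).mul_left).mul_left

theorem wirtingerBar_const_mul (a b : V) (r : ℂ) {f : V → ℂ} {x : V}
    (hf : DifferentiableAt ℝ f x) :
    wirtingerBar a b (fun y => r * f y) x = r * wirtingerBar a b f x := by
  simp only [wirtingerBar, fderiv_const_mul hf, smul_apply, smul_eq_mul]
  ring

theorem wirtingerBar_exp_mul (a b : V) {ψ : V → ℝ} {f : V → ℂ} {x : V}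
    (hψ : DifferentiableAt ℝ ψ x) (hf : DifferentiableAt ℝ f x) :
    wirtingerBar a b (fun y => Real.exp (ψ y) * f y) x = Real.exp (ψ x) *
      (wirtingerBar a b f x + wirtingerBar a b (fun y => (ψ y : ℂ)) x * f x) := by
  have hψ' : HasFDerivAt (fun y => (ψ y : ℂ)) _ x := ofRealCLM.hasFDerivAt.comp x hψ.hasFDerivAt
  simp only [ofReal_exp, wirtingerBar, (hψ'.cexp.fun_mul hf.hasFDerivAt).fderiv, hψ'.fderiv,
    add_apply, smul_apply, smul_eq_mul]
  ring

theorem contDiff_wirtingerBar {m k : WithTop ℕ∞} {f : V → ℂ} (hf : ContDiff ℝ k f)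
    (hmk : m + 1 ≤ k) (a b : V) : ContDiff ℝ m (wirtingerBar a b f) := by
  have (v : V) : ContDiff ℝ m fun x => fderiv ℝ f x v :=
    (hf.fderiv_right hmk).clm_apply contDiff_const
  unfold wirtingerBar
  fun_prop

variable [FiniteDimensional ℝ V] [MeasurableSpace V] [BorelSpace V] {μ : Measure V}
  [μ.IsAddHaarMeasure]

-- `⟪w, I * z⟫` is antisymmetric in `w` and `z`, whereas two integrations by parts swap `a` and `b`.
theorem integral_inner_fderiv_I_mul_fderiv_eq_zero {g : V → ℂ} (hg : ContDiff ℝ 2 g)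
    (hgs : HasCompactSupport g) (a b : V) :
    ∫ x, ⟪fderiv ℝ g x a, I * fderiv ℝ g x b⟫_ℝ ∂μ = 0 := by
  let B : ℂ →L[ℝ] ℂ →L[ℝ] ℝ := (innerSL ℝ).bilinearComp (.id ℝ ℂ) (.mul ℝ ℂ I)
  have B_swap (w z : ℂ) : B w z = -B z w := by
    simp only [B, ContinuousLinearMap.bilinearComp_apply, ContinuousLinearMap.id_apply,
      ContinuousLinearMap.mul_apply', coe_innerSL_apply, Complex.inner, mul_re, mul_im, I_re, I_im,
      conj_re, conj_im]
    ring
  have comm := integral_bilin_fderiv_fderiv_comm (μ := μ) B hg (hg.of_le one_le_two) hgs a b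
  simp_rw [B_swap (fderiv ℝ g _ b), integral_neg] at comm
  exact self_eq_neg.1 comm

-- The last integral is the commutator of `∂̄ - s` with its formal adjoint `-(∂ + s̄)`.
theorem integral_norm_sq_wirtingerBar_sub_mul {g s : V → ℂ} (hg : ContDiff ℝ 2 g)
    (hgs : HasCompactSupport g) (hs : ContDiff ℝ 1 s) (a b : V) :
    ∫ x, ‖wirtingerBar a b g x - s x * g x‖ ^ 2 ∂μ
      = ∫ x, ‖wirtingerHol a b g x + starRingEnd ℂ (s x) * g x‖ ^ 2 ∂μ
        + ∫ x, 2 * (wirtingerHol a b s x).re * ‖g x‖ ^ 2 ∂μ := by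
  have hg1 : ContDiff ℝ 1 g := hg.of_le one_le_two
  have hgc : Continuous g := hg.continuous
  have hsc : Continuous s := hs.continuous
  have (v : V) : Continuous fun x => fderiv ℝ g x v :=
    (hg.continuous_fderiv two_ne_zero).clm_apply continuous_const
  have (v : V) : Continuous fun x => fderiv ℝ s x v :=
    (hs.continuous_fderiv one_ne_zero).clm_apply continuous_const
  have hgh : Continuous (wirtingerHol a b g) := by unfold wirtingerHol; fun_prop
  have integrable {f : V → ℝ} (hf : Continuous f)
      (hf0 : ∀ x, g x = 0 → fderiv ℝ g x = 0 → f x = 0) : Integrable f μ :=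
    hf.integrable_of_hasCompactSupport <| .intro hgs.isCompact fun x hx =>
      hf0 x (image_eq_zero_of_notMem_tsupport hx) <| by
        simpa using mt (support_fderiv_subset ℝ (f := g) ·) hx
  have re_part := integral_mul_inner_fderiv (μ := μ) (reCLM.contDiff.comp hs) hg1 hgs a
  have im_part := integral_mul_inner_fderiv (μ := μ) (imCLM.contDiff.comp hs) hg1 hgs b
  have fderiv_clm_comp (L : ℂ →L[ℝ] ℝ) (x v : V) :
      fderiv ℝ (L ∘ s) x v = L (fderiv ℝ s x v) := by
    simp [fderiv_comp x L.differentiableAt (hs.differentiable one_ne_zero x)]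
  simp only [fderiv_clm_comp, Function.comp_apply, reCLM_apply, imCLM_apply] at re_part im_part
  have two_mul_re_wirtingerHol (x : V) :
      2 * (wirtingerHol a b s x).re = (fderiv ℝ s x a).re + (fderiv ℝ s x b).im := by
    simp [wirtingerHol]
  simp_rw [norm_sq_wirtingerBar_sub_mul, two_mul_re_wirtingerHol, add_mul]
  rw [integral_sub, integral_add, integral_add, integral_add,
    integral_inner_fderiv_I_mul_fderiv_eq_zero hg hgs, re_part, im_part]
  · ring
  all_goals
    refine integrable ?_ fun x hx hx' => by simp [wirtingerHol, hx, hx']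
    fun_prop

theorem norm_exp_half_mul_sq (r : ℝ) (w : ℂ) :
    ‖Real.exp (r / 2) * w‖ ^ 2 = ‖w‖ ^ 2 * Real.exp r := by
  rw [norm_mul, mul_pow, norm_real, Real.norm_of_nonneg (Real.exp_nonneg _), ← Real.exp_nat_mul,
    mul_comm]
  congr 2
  ring

theorem integral_levi_mul_norm_sq_mul_exp_le {φ : V → ℝ} {q G : V → ℂ} (hφ : ContDiff ℝ 2 φ)
    (hq : ContDiff ℝ 1 q) (hG : ContDiff ℝ 2 G) (hGs : HasCompactSupport G) (a b : V) :
    ∫ x, ((wirtingerHol a b (wirtingerBar a b fun y => (φ y : ℂ)) x).re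
        - 2 * (wirtingerHol a b q x).re) * (‖G x‖ ^ 2 * Real.exp (φ x)) ∂μ
      ≤ ∫ x, ‖wirtingerBar a b G x + q x * G x‖ ^ 2 * Real.exp (φ x) ∂μ := by
  -- Conjugation by `e^{φ/2}` trades the weight for the zeroth order coefficient `s`.
  let g (x : V) : ℂ := Real.exp (φ x / 2) * G x
  let s (x : V) : ℂ := 1 / 2 * wirtingerBar a b (fun y => (φ y : ℂ)) x - q x
  have hφ' : ContDiff ℝ 2 fun x => (φ x : ℂ) := ofRealCLM.contDiff.comp hφ
  have hφbar : ContDiff ℝ 1 (wirtingerBar a b fun y => (φ y : ℂ)) :=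
    contDiff_wirtingerBar hφ' (by norm_num) a b
  have hg : ContDiff ℝ 2 g := (ofRealCLM.contDiff.comp (hφ.div_const 2).exp).mul hG
  have hs : ContDiff ℝ 1 s := by fun_prop
  have wirtingerBar_g (x : V) : wirtingerBar a b g x - s x * g x
      = Real.exp (φ x / 2) * (wirtingerBar a b G x + q x * G x) := by
    have half (y : V) : ((φ y / 2 : ℝ) : ℂ) = 1 / 2 * φ y := by
      push_cast
      ring
    simp only [g, s]
    rw [wirtingerBar_exp_mul a b ((hφ.div_const 2).differentiable two_ne_zero x)
      (hG.differentiable two_ne_zero x)]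
    simp only [half]
    rw [wirtingerBar_const_mul a b _ (hφ'.differentiable two_ne_zero x)]
    ring
  have re_wirtingerHol_s (x : V) : 2 * (wirtingerHol a b s x).re
      = (wirtingerHol a b (wirtingerBar a b fun y => (φ y : ℂ)) x).re
        - 2 * (wirtingerHol a b q x).re := by
    have hx := hφbar.differentiable one_ne_zero x
    simp only [s, wirtingerHol, fderiv_fun_sub (hx.const_mul _) (hq.differentiable one_ne_zero x),
      fderiv_const_mul hx, sub_apply, smul_apply,
      smul_eq_mul, one_div, sub_re, sub_im, mul_re, mul_im, I_re, I_im, inv_re, inv_im, re_ofNat,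
      im_ofNat, normSq_ofNat]
    ring
  have key := integral_norm_sq_wirtingerBar_sub_mul (μ := μ) hg hGs.mul_left hs a b
  simp only [wirtingerBar_g, re_wirtingerHol_s] at key
  simp only [g, norm_exp_half_mul_sq] at key
  rw [key]
  exact le_add_of_nonneg_left (integral_nonneg fun x => by positivity)

end Wirtinger

section WeightedSpace

theorem integrable_norm_sq_of_hasCompactSupport {X F : Type*} [TopologicalSpace X]
    [MeasurableSpace X] [OpensMeasurableSpace X] {μ : Measure X} [IsFiniteMeasureOnCompacts μ]
    [NormedAddCommGroup F] {f : X → F} (hf : Continuous f) (hfs : HasCompactSupport f) :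
    Integrable (fun x => ‖f x‖ ^ 2) μ := by
  have hfs' : HasCompactSupport fun x => ‖f x‖ ^ 2 :=
    hfs.comp_left (g := fun w => ‖w‖ ^ 2) (by simp)
  exact (hf.norm.pow 2).integrable_of_hasCompactSupport hfs'

variable {ι : Type*} [Fintype ι]

variable (ι) in
/-- The measure `e^{|z|²} dλ` on `ℂ^ι`. -/
def expNormSqMeasure : Measure (ι → ℂ) :=
  volume.withDensity fun z => ENNReal.ofReal (Real.exp (∑ j, normSq (z j)))

theorem contDiff_sum_normSq {n : WithTop ℕ∞} :
    ContDiff ℝ n fun z : ι → ℂ => ∑ j, normSq (z j) := by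
  simp_rw [normSq_eq_norm_sq]
  exact .sum fun j _ => (contDiff_apply ℝ ℂ j).norm_sq ℝ

theorem measurable_exp_sum_normSq :
    Measurable fun z : ι → ℂ => ENNReal.ofReal (Real.exp (∑ j, normSq (z j))) :=
  (contDiff_sum_normSq (n := 0)).continuous.rexp.measurable.ennreal_ofReal

instance : SFinite (expNormSqMeasure ι) := by
  unfold expNormSqMeasure
  infer_instance

instance : IsLocallyFiniteMeasure (expNormSqMeasure ι) :=
  IsLocallyFiniteMeasure.withDensity_ofReal (contDiff_sum_normSq (n := 0)).continuous.rexp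

theorem integral_expNormSqMeasure (f : (ι → ℂ) → ℝ) :
    ∫ z, f z ∂expNormSqMeasure ι = ∫ z, f z * Real.exp (∑ j, normSq (z j)) := by
  rw [expNormSqMeasure, integral_withDensity_eq_integral_toReal_smul measurable_exp_sum_normSq
    (.of_forall fun _ => ENNReal.ofReal_lt_top)]
  simp [ENNReal.toReal_ofReal, Real.exp_nonneg, mul_comm]

theorem integral_expNormSqMeasure_prod {X : Type*} [MeasurableSpace X] (ν : Measure X) [SFinite ν]
    (f : (ι → ℂ) × X → ℝ) :
    ∫ p, f p ∂(expNormSqMeasure ι).prod ν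
      = ∫ p, f p * Real.exp (∑ j, normSq (p.1 j)) ∂volume.prod ν := by
  have hm : Measurable fun p : (ι → ℂ) × X => ENNReal.ofReal (Real.exp (∑ j, normSq (p.1 j))) :=
    measurable_exp_sum_normSq.comp measurable_fst
  rw [expNormSqMeasure, prod_withDensity_left measurable_exp_sum_normSq,
    integral_withDensity_eq_integral_toReal_smul hm (.of_forall fun _ => ENNReal.ofReal_lt_top)]
  simp [ENNReal.toReal_ofReal, Real.exp_nonneg, mul_comm]

theorem wirtingerHol_dotProduct (w a z : ι → ℂ) :
    wirtingerHol a (I • a) (w ⬝ᵥ ·) z = w ⬝ᵥ a := by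
  let L : (ι → ℂ) →L[ℝ] ℂ := (dotProductBilin ℂ ℂ w).toContinuousLinearMap.restrictScalars ℝ
  have hL (v : ι → ℂ) : fderiv ℝ (w ⬝ᵥ ·) z v = w ⬝ᵥ v := DFunLike.congr_fun L.fderiv v
  simp only [wirtingerHol, hL, dotProduct_smul, smul_eq_mul]
  linear_combination -(w ⬝ᵥ a) / 2 * I_sq

theorem wirtingerBar_sum_normSq (c z : ι → ℂ) :
    wirtingerBar (star c) (I • star c) (fun z => ((∑ j, normSq (z j) : ℝ) : ℂ)) z = c ⬝ᵥ z := by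
  have hz (j : ι) : HasFDerivAt (fun z : ι → ℂ => z j) _ z :=
    (ContinuousLinearMap.proj (R := ℝ) (φ := fun _ : ι => ℂ) j).hasFDerivAt
  have hd := HasFDerivAt.fun_sum (u := univ) fun j _ =>
    (hz j).fun_mul (hz j).star
  have fderiv_apply (v : ι → ℂ) : fderiv ℝ (fun z : ι → ℂ => ((∑ j, normSq (z j) : ℝ) : ℂ)) z v
      = z ⬝ᵥ star v + star z ⬝ᵥ v := by
    simp only [ofReal_sum, ← mul_conj, starRingEnd_apply, hd.fderiv]
    simp [dotProduct, sum_add_distrib]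
  simp only [wirtingerBar, fderiv_apply, star_smul, star_star, dotProduct_smul, smul_eq_mul]
  rw [dotProduct_comm c]
  simp only [RCLike.star_def, conj_I, neg_mul]
  linear_combination (star z ⬝ᵥ star c - z ⬝ᵥ c) / 2 * I_sq

theorem wirtingerBar_star_eq_sum [DecidableEq ι] (c : ι → ℂ) (f : (ι → ℂ) → ℂ) (z : ι → ℂ) :
    wirtingerBar (star c) (I • star c) f z
      = ∑ j, c j * wirtingerBar (Pi.single j 1) (Pi.single j I) f z := by
  have eq_sum_single (w : ι → ℂ) :
      w = ∑ j, ((w j).re • (Pi.single j 1 : ι → ℂ) + (w j).im • (Pi.single j I : ι → ℂ)) := by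
    ext k
    simp [Finset.sum_apply, Pi.single_apply, sum_add_distrib, re_add_im]
  have fderiv_eq_sum (w : ι → ℂ) : fderiv ℝ f z w
      = ∑ j, ((w j).re * fderiv ℝ f z (Pi.single j 1)
          + (w j).im * fderiv ℝ f z (Pi.single j I)) := by
    conv_lhs => rw [eq_sum_single w]
    simp [map_sum]
  rw [wirtingerBar, fderiv_eq_sum, fderiv_eq_sum (I • star c), mul_sum, ← sum_add_distrib, mul_sum]
  refine sum_congr rfl fun j _ => ?_
  simp only [wirtingerBar, Pi.star_apply, RCLike.star_def, conj_re, conj_im, ofReal_neg, neg_mul,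
    Pi.smul_apply, smul_eq_mul, mul_re, mul_im, I_re, I_im, zero_mul, one_mul, mul_neg, zero_add,
    neg_zero, sub_neg_eq_add]
  linear_combination (fderiv ℝ f z (Pi.single j 1) + I * fderiv ℝ f z (Pi.single j I)) / 2
    * re_add_im (c j) - (c j).im * fderiv ℝ f z (Pi.single j I) / 2 * I_sq

theorem norm_sq_sum_mul_le (c f : ι → ℂ) :
    ‖∑ j, c j * f j‖ ^ 2 ≤ (∑ j, ‖c j‖ ^ 2) * ∑ j, ‖f j‖ ^ 2 := by
  calc ‖∑ j, c j * f j‖ ^ 2 ≤ (∑ j, ‖c j‖ * ‖f j‖) ^ 2 := by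
        gcongr
        simpa using norm_sum_le univ fun j => c j * f j
    _ ≤ _ := sum_mul_sq_le_sq_mul_sq _ _ _

theorem sum_norm_sq_mul_integral_le {A : Matrix ι ι ℂ} {c : ι → ℂ}
    (hc : (star c ⬝ᵥ A *ᵥ c).re ≤ 0) {G : (ι → ℂ) → ℂ} (hG : ContDiff ℝ 2 G)
    (hGs : HasCompactSupport G) :
    (∑ j, ‖c j‖ ^ 2) * ∫ z, ‖G z‖ ^ 2 ∂expNormSqMeasure ι
      ≤ ∫ z, ‖wirtingerBar (star c) (I • star c) G z + A *ᵥ c ⬝ᵥ z * G z‖ ^ 2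
          ∂expNormSqMeasure ι := by
  have re_dotProduct_star : (c ⬝ᵥ star c).re = ∑ j, ‖c j‖ ^ 2 := by
    simp [dotProduct, ← normSq_eq_norm_sq, mul_conj]
  have key := integral_levi_mul_norm_sq_mul_exp_le (μ := volume) contDiff_sum_normSq
    (q := (A *ᵥ c ⬝ᵥ ·)) (by unfold dotProduct; fun_prop) hG hGs (star c) (I • star c)
  simp only [funext (wirtingerBar_sum_normSq c), wirtingerHol_dotProduct,
    integral_const_mul, re_dotProduct_star] at key
  rw [integral_expNormSqMeasure, integral_expNormSqMeasure]
  refine le_trans ?_ key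
  gcongr
  rw [dotProduct_comm]
  linarith

/-- The operator `∂/∂z̄_j + (zᵀA)_j`: the partial Fourier transform in `x` turns `L̄_j` into such an
operator on every fibre. -/
def twistedBar [DecidableEq ι] (A : Matrix ι ι ℂ) (j : ι) (G : (ι → ℂ) → ℂ) (z : ι → ℂ) : ℂ :=
  wirtingerBar (Pi.single j 1) (Pi.single j I) G z + (z ᵥ* A) j * G z

theorem continuous_twistedBar [DecidableEq ι] (A : Matrix ι ι ℂ) (j : ι) {G : (ι → ℂ) → ℂ}
    (hG : ContDiff ℝ 1 G) : Continuous (twistedBar A j G) := by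
  have hG' : Continuous (wirtingerBar (Pi.single j 1) (Pi.single j I) G) :=
    (contDiff_wirtingerBar hG (m := 0) (by simp) _ _).continuous
  have hGc := hG.continuous
  unfold twistedBar Matrix.vecMul dotProduct
  fun_prop

theorem hasCompactSupport_twistedBar [DecidableEq ι] (A : Matrix ι ι ℂ) (j : ι)
    {G : (ι → ℂ) → ℂ} (hGs : HasCompactSupport G) : HasCompactSupport (twistedBar A j G) :=
  (hasCompactSupport_wirtingerBar hGs _ _).add hGs.mul_left

theorem wirtingerBar_star_add_eq_sum_twistedBar [DecidableEq ι] (A : Matrix ι ι ℂ) (c : ι → ℂ)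
    (G : (ι → ℂ) → ℂ) (z : ι → ℂ) :
    wirtingerBar (star c) (I • star c) G z + A *ᵥ c ⬝ᵥ z * G z = ∑ j, c j * twistedBar A j G z := by
  have : A *ᵥ c ⬝ᵥ z = ∑ j, c j * (z ᵥ* A) j := by
    rw [dotProduct_comm, Matrix.dotProduct_mulVec, dotProduct_comm]
    rfl
  simp only [wirtingerBar_star_eq_sum, this, twistedBar, mul_add, sum_add_distrib, sum_mul,
    mul_assoc]

theorem integral_norm_sq_le_sum_integral_twistedBar [DecidableEq ι] {A : Matrix ι ι ℂ}
    {c : ι → ℂ} (hc0 : c ≠ 0) (hc : (star c ⬝ᵥ A *ᵥ c).re ≤ 0) {G : (ι → ℂ) → ℂ}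
    (hG : ContDiff ℝ 2 G) (hGs : HasCompactSupport G) :
    ∫ z, ‖G z‖ ^ 2 ∂expNormSqMeasure ι
      ≤ ∑ j, ∫ z, ‖twistedBar A j G z‖ ^ 2 ∂expNormSqMeasure ι := by
  have sum_pos : 0 < ∑ j, ‖c j‖ ^ 2 := by
    obtain ⟨j, hj⟩ := Function.ne_iff.1 hc0
    exact sum_pos' (fun _ _ => by positivity) ⟨j, mem_univ j, by positivity⟩
  have integrable (j : ι) :
      Integrable (fun z => ‖twistedBar A j G z‖ ^ 2) (expNormSqMeasure ι) :=
    integrable_norm_sq_of_hasCompactSupport (continuous_twistedBar A j (hG.of_le one_le_two))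
      (hasCompactSupport_twistedBar A j hGs)
  refine le_of_mul_le_mul_left ?_ sum_pos
  calc (∑ j, ‖c j‖ ^ 2) * ∫ z, ‖G z‖ ^ 2 ∂expNormSqMeasure ι
      ≤ ∫ z, ‖∑ j, c j * twistedBar A j G z‖ ^ 2 ∂expNormSqMeasure ι := by
        simp_rw [← wirtingerBar_star_add_eq_sum_twistedBar]
        exact sum_norm_sq_mul_integral_le hc hG hGs
    _ ≤ ∫ z, (∑ j, ‖c j‖ ^ 2) * ∑ j, ‖twistedBar A j G z‖ ^ 2 ∂expNormSqMeasure ι := by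
        have hi : Integrable (fun z => (∑ j, ‖c j‖ ^ 2) * ∑ j, ‖twistedBar A j G z‖ ^ 2)
            (expNormSqMeasure ι) := (integrable_finsetSum _ fun j _ => integrable j).const_mul _
        refine integral_mono_of_nonneg ?_ hi ?_
        · exact .of_forall fun z => sq_nonneg _
        · exact .of_forall fun z => norm_sq_sum_mul_le c _
    _ = (∑ j, ‖c j‖ ^ 2) * ∑ j, ∫ z, ‖twistedBar A j G z‖ ^ 2 ∂expNormSqMeasure ι := by
        rw [integral_const_mul, integral_finsetSum _ fun j _ => integrable j]

end WeightedSpace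

section ParametricIntegral

variable {E X F : Type*}

theorem apply_eq_zero_of_notMem_image_fst_tsupport [TopologicalSpace E] [TopologicalSpace X]
    [Zero F] {v : E × X → F} {z : E} (hz : z ∉ Prod.fst '' tsupport v) (x : X) : v (z, x) = 0 :=
  by_contra fun h => hz ⟨(z, x), subset_tsupport v h, rfl⟩

theorem apply_eq_zero_of_notMem_image_snd_tsupport [TopologicalSpace E] [TopologicalSpace X]
    [Zero F] {v : E × X → F} {x : X} (hx : x ∉ Prod.snd '' tsupport v) (z : E) : v (z, x) = 0 :=
  by_contra fun h => hx ⟨(z, x), subset_tsupport v h, rfl⟩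

theorem hasCompactSupport_slice [TopologicalSpace E] [TopologicalSpace X] [R1Space X] [Zero F]
    {v : E × X → F} (hvs : HasCompactSupport v) (z : E) : HasCompactSupport fun x => v (z, x) :=
  .intro (hvs.isCompact.image continuous_snd) fun _ hx =>
    apply_eq_zero_of_notMem_image_snd_tsupport hx z

variable [NormedAddCommGroup E] [NormedAddCommGroup X] [NormedAddCommGroup F]
  [NormedSpace ℝ E] [NormedSpace ℝ X] [NormedSpace ℂ F]
  [FiniteDimensional ℝ X] [MeasurableSpace X] [BorelSpace X] {μ : Measure X}

theorem hasFDerivAt_integral_smul_of_hasCompactSupport {k : X → ℂ} (hk : LocallyIntegrable k μ)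
    {v : E × X → F} (hv : ContDiff ℝ 1 v) (hvs : HasCompactSupport v) (z : E) :
    HasFDerivAt (fun z => ∫ x, k x • v (z, x) ∂μ)
      (∫ x, k x • (fderiv ℝ v (z, x) ∘L .inl ℝ E X) ∂μ) z := by
  let D (p : E × X) : E →L[ℝ] F := fderiv ℝ v p ∘L .inl ℝ E X
  have hD : Continuous D := (hv.continuous_fderiv one_ne_zero).clm_comp continuous_const
  have hDs : HasCompactSupport D :=
    (hvs.fderiv ℝ).comp_left (g := (· ∘L .inl ℝ E X)) (ContinuousLinearMap.zero_comp _)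
  have hvc : Continuous v := hv.continuous
  obtain ⟨C, hC⟩ := hDs.exists_bound_of_continuous hD
  let K : Set X := Prod.snd '' tsupport D
  have hK : IsCompact K := hDs.isCompact.image continuous_snd
  have hkm : AEStronglyMeasurable k μ := hk.aestronglyMeasurable
  refine hasFDerivAt_integral_of_dominated_of_fderiv_le (s := Set.univ)
    (F' := fun z x => k x • D (z, x)) (bound := K.indicator fun x => ‖k x‖ * C)
    Filter.univ_mem ?_ ?_ ?_ ?_ ?_ ?_
  · refine .of_forall fun z => hkm.smul (Continuous.aestronglyMeasurable ?_)
    fun_prop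
  · exact hk.integrable_smul_right_of_hasCompactSupport (by fun_prop)
      (hasCompactSupport_slice hvs z)
  · refine hkm.smul (Continuous.aestronglyMeasurable ?_)
    fun_prop
  · refine .of_forall fun x z _ => ?_
    by_cases hx : x ∈ K
    · rw [Set.indicator_of_mem hx, norm_smul]
      gcongr
      exact hC _
    · simp [Set.indicator_of_notMem hx, apply_eq_zero_of_notMem_image_snd_tsupport hx]
  · have hkC : IntegrableOn (fun x => ‖k x‖ * C) K μ :=
      (hk.integrableOn_isCompact hK).norm.mul_const C
    exact hkC.integrable_indicator hK.measurableSet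
  · refine .of_forall fun x z _ => .const_smul ?_ (k x)
    exact (hv.differentiable one_ne_zero (z, x)).hasFDerivAt.comp z (hasFDerivAt_prodMk_left z x)

theorem fderiv_integral_smul_of_hasCompactSupport {k : X → ℂ} (hk : LocallyIntegrable k μ)
    {v : E × X → F} (hv : ContDiff ℝ 1 v) (hvs : HasCompactSupport v) (z a : E) :
    fderiv ℝ (fun z => ∫ x, k x • v (z, x) ∂μ) z a
      = ∫ x, k x • fderiv ℝ v (z, x) (a, 0) ∂μ := by
  have hdv : Continuous fun x => fderiv ℝ v (z, x) ∘L .inl ℝ E X :=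
    ((hv.continuous_fderiv one_ne_zero).comp (.prodMk_right z)).clm_comp continuous_const
  have hdvs : HasCompactSupport fun x => fderiv ℝ v (z, x) ∘L .inl ℝ E X :=
    (hasCompactSupport_slice (hvs.fderiv ℝ) z).comp_left (g := (· ∘L .inl ℝ E X))
      (ContinuousLinearMap.zero_comp _)
  rw [(hasFDerivAt_integral_smul_of_hasCompactSupport hk hv hvs z).fderiv,
    ContinuousLinearMap.integral_apply
      (hk.integrable_smul_right_of_hasCompactSupport hdv hdvs)]
  simp

theorem contDiff_integral_smul_of_hasCompactSupport [FiniteDimensional ℝ E] {k : X → ℂ}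
    (hk : LocallyIntegrable k μ) {m : ℕ} {v : E × X → F} (hv : ContDiff ℝ m v)
    (hvs : HasCompactSupport v) : ContDiff ℝ m fun z => ∫ x, k x • v (z, x) ∂μ := by
  induction m generalizing v with
  | zero =>
    have hvc : Continuous v := hv.continuous
    refine contDiff_zero.2 (continuousOn_univ.1 ?_)
    exact continuousOn_integral_bilinear_of_locally_integrable_of_compact_support
      (f := fun z x => v (z, x)) (.lsmul ℝ ℂ) (hvs.isCompact.image continuous_snd)
      (Continuous.continuousOn (by fun_prop))
      (fun z _ _ hx => apply_eq_zero_of_notMem_image_snd_tsupport hx z)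
      (hk.integrableOn_isCompact (hvs.isCompact.image continuous_snd))
  | succ m ih =>
    have hv1 : ContDiff ℝ 1 v := hv.of_le (by exact_mod_cast m.succ_pos)
    rw [Nat.cast_succ] at hv ⊢
    rw [contDiff_succ_iff_fderiv_apply]
    refine ⟨fun z => ?_, by simp, fun a => ?_⟩
    · exact (hasFDerivAt_integral_smul_of_hasCompactSupport hk hv1 hvs z).differentiableAt
    · simp_rw [fderiv_integral_smul_of_hasCompactSupport hk hv1 hvs]
      exact ih ((hv.fderiv_right le_rfl).clm_apply contDiff_const)
        (hvs.fderiv_apply ℝ (a, 0))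

end ParametricIntegral

section PartialFourier

variable {E X F : Type*} [NormedAddCommGroup X]
  [InnerProductSpace ℝ X] [FiniteDimensional ℝ X] [MeasurableSpace X] [BorelSpace X]
  [NormedAddCommGroup F] [NormedSpace ℂ F]

/-- The partial Fourier transform in the second variable, at the frequency `ξ`, as a function of the
first variable. -/
def partialFourier (v : E × X → F) (ξ : X) (z : E) : F :=
  𝓕 (fun x => v (z, x)) ξ

theorem partialFourier_eq_integral (v : E × X → F) (ξ : X) (z : E) :
    partialFourier v ξ z = ∫ x, (Real.fourierChar (-⟪x, ξ⟫_ℝ) : ℂ) • v (z, x) :=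
  Real.fourier_eq _ _

theorem locallyIntegrable_fourierChar_neg_inner (ξ : X) :
    LocallyIntegrable fun x : X => (Real.fourierChar (-⟪x, ξ⟫_ℝ) : ℂ) :=
  Continuous.locallyIntegrable (by fun_prop)

theorem hasCompactSupport_partialFourier [TopologicalSpace E] [R1Space E] {v : E × X → F}
    (hvs : HasCompactSupport v) (ξ : X) : HasCompactSupport (partialFourier v ξ) := by
  refine .intro (hvs.isCompact.image continuous_fst) fun z hz => ?_
  simp [partialFourier_eq_integral, apply_eq_zero_of_notMem_image_fst_tsupport hz]

theorem stronglyMeasurable_partialFourier [TopologicalSpace E] [MeasurableSpace E]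
    [OpensMeasurableSpace E] [SecondCountableTopology E] {v : E × X → F} (hv : Continuous v) :
    StronglyMeasurable fun q : X × E => partialFourier v q.1 q.2 := by
  simp only [partialFourier_eq_integral]
  refine StronglyMeasurable.integral_prod_right'
    (f := fun q : (X × E) × X => (Real.fourierChar (-⟪q.2, q.1.1⟫_ℝ) : ℂ) • v (q.1.2, q.2))
    (Continuous.stronglyMeasurable ?_)
  fun_prop

variable [NormedAddCommGroup E] [NormedSpace ℝ E]

theorem contDiff_partialFourier [FiniteDimensional ℝ E] {m : ℕ} {v : E × X → F}
    (hv : ContDiff ℝ m v) (hvs : HasCompactSupport v) (ξ : X) :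
    ContDiff ℝ m (partialFourier v ξ) := by
  simp only [funext (partialFourier_eq_integral v ξ)]
  exact contDiff_integral_smul_of_hasCompactSupport (locallyIntegrable_fourierChar_neg_inner ξ)
    hv hvs

theorem partialFourier_fderiv_left {v : E × X → F} (hv : ContDiff ℝ 1 v)
    (hvs : HasCompactSupport v) (a : E) (ξ : X) (z : E) :
    partialFourier (fun p => fderiv ℝ v p (a, 0)) ξ z = fderiv ℝ (partialFourier v ξ) z a := by
  rw [funext (partialFourier_eq_integral v ξ), partialFourier_eq_integral,
    fderiv_integral_smul_of_hasCompactSupport (locallyIntegrable_fourierChar_neg_inner ξ) hv hvs]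

theorem partialFourier_fderiv_right {v : E × X → F} (hv : ContDiff ℝ 1 v)
    (hvs : HasCompactSupport v) (y ξ : X) (z : E) :
    partialFourier (fun p => fderiv ℝ v p (0, y)) ξ z
      = (2 * Real.pi * I * ⟪y, ξ⟫_ℝ) • partialFourier v ξ z := by
  let f (x : X) : F := v (z, x)
  have hf : ContDiff ℝ 1 f := hv.comp (contDiff_prodMk_right z)
  have hfs : HasCompactSupport f := hasCompactSupport_slice hvs z
  have hdf : Integrable (fderiv ℝ f) :=
    (hf.continuous_fderiv one_ne_zero).integrable_of_hasCompactSupport (hfs.fderiv ℝ)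
  have fderiv_slice (x : X) : fderiv ℝ v (z, x) (0, y) = fderiv ℝ f x y :=
    (DFunLike.congr_fun ((hv.differentiable one_ne_zero (z, x)).hasFDerivAt.comp x
      (hasFDerivAt_prodMk_right z x)).fderiv y).symm
  simp only [partialFourier, fderiv_slice]
  rw [← Real.fourier_continuousLinearMap_apply hdf, Real.fourier_fderiv
    (hf.continuous.integrable_of_hasCompactSupport hfs) (hf.differentiable one_ne_zero) hdf]
  rw [real_inner_comm]
  simp only [VectorFourier.fourierSMulRight_apply, neg_apply, neg_smul, smul_neg, neg_neg, mul_smul,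
    Complex.coe_smul]
  rfl

theorem fourier_fun_add {f g : X → F} (hf : Integrable f) (hg : Integrable g) (ξ : X) :
    𝓕 (fun x => f x + g x) ξ = 𝓕 f ξ + 𝓕 g ξ :=
  congrFun (VectorFourier.fourierIntegral_add Real.continuous_fourierChar continuous_inner hf hg) ξ

theorem fourier_const_mul (c : ℂ) (f : X → ℂ) (ξ : X) :
    𝓕 (fun x => c * f x) ξ = c * 𝓕 f ξ :=
  congrFun (VectorFourier.fourierIntegral_const_smul _ _ _ _ _) ξ

theorem integrable_fderiv_slice {v : E × X → F} (hv : ContDiff ℝ 1 v) (hvs : HasCompactSupport v)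
    (p : E × X) (z : E) : Integrable fun x => fderiv ℝ v (z, x) p :=
  (((hv.continuous_fderiv one_ne_zero).clm_apply continuous_const).comp
    (.prodMk_right z)).integrable_of_hasCompactSupport
    (hasCompactSupport_slice (hvs.fderiv_apply ℝ p) z)

theorem partialFourier_fderiv {v : E × X → F} (hv : ContDiff ℝ 1 v) (hvs : HasCompactSupport v)
    (a : E) (y ξ : X) (z : E) :
    partialFourier (fun p => fderiv ℝ v p (a, y)) ξ z
      = fderiv ℝ (partialFourier v ξ) z a
        + (2 * Real.pi * I * ⟪y, ξ⟫_ℝ) • partialFourier v ξ z := by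
  have add (p : E × X) : fderiv ℝ v p (a, y) = fderiv ℝ v p (a, 0) + fderiv ℝ v p (0, y) := by
    simp [← map_add]
  rw [← partialFourier_fderiv_left hv hvs, ← partialFourier_fderiv_right hv hvs, funext add]
  exact fourier_fun_add (integrable_fderiv_slice hv hvs _ z) (integrable_fderiv_slice hv hvs _ z) ξ

theorem partialFourier_wirtingerBar {v : E × X → ℂ} (hv : ContDiff ℝ 1 v)
    (hvs : HasCompactSupport v) (a b : E) (x y ξ : X) (z : E) :
    partialFourier (wirtingerBar (a, x) (b, y) v) ξ z
      = wirtingerBar a b (partialFourier v ξ) z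
        + Real.pi * I * (⟪x, ξ⟫_ℝ + I * ⟪y, ξ⟫_ℝ) * partialFourier v ξ z := by
  have integrable (p : E × X) : Integrable fun x => fderiv ℝ v (z, x) p :=
    integrable_fderiv_slice hv hvs p z
  have linear : partialFourier (wirtingerBar (a, x) (b, y) v) ξ z
      = 1 / 2 * (partialFourier (fun p => fderiv ℝ v p (a, x)) ξ z
        + I * partialFourier (fun p => fderiv ℝ v p (b, y)) ξ z) := by
    simp only [partialFourier, wirtingerBar]
    rw [fourier_const_mul, fourier_fun_add (integrable _) ((integrable _).const_mul I),
      fourier_const_mul]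
  rw [linear, partialFourier_fderiv hv hvs, partialFourier_fderiv hv hvs, wirtingerBar]
  simp only [smul_eq_mul]
  ring

theorem ofReal_integral_norm_sq_eq_lintegral {α F : Type*} [MeasurableSpace α] {μ : Measure α}
    [NormedAddCommGroup F] {f : α → F} (hf : Integrable (fun x => ‖f x‖ ^ 2) μ) :
    ENNReal.ofReal (∫ x, ‖f x‖ ^ 2 ∂μ) = ∫⁻ x, ‖f x‖ₑ ^ 2 ∂μ := by
  rw [ofReal_integral_eq_lintegral_ofReal hf (.of_forall fun _ => by positivity)]
  simp [ENNReal.ofReal_pow, ofReal_norm]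

theorem lintegral_enorm_sq_partialFourier {v : E × X → ℂ} (hv : ContDiff ℝ ∞ v)
    (hvs : HasCompactSupport v) (z : E) :
    ∫⁻ ξ, ‖partialFourier v ξ z‖ₑ ^ 2 = ∫⁻ x, ‖v (z, x)‖ₑ ^ 2 := by
  let f : SchwartzMap X ℂ := (hasCompactSupport_slice hvs z).toSchwartzMap <|
    hv.comp (contDiff_prodMk_right z)
  have integrable (g : SchwartzMap X ℂ) : Integrable fun x => ‖g x‖ ^ 2 :=
    (memLp_two_iff_integrable_sq_norm g.continuous.aestronglyMeasurable).1 (g.memLp 2)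
  have plancherel : ∫⁻ ξ, ‖(𝓕 f) ξ‖ₑ ^ 2 = ∫⁻ x, ‖f x‖ₑ ^ 2 := by
    rw [← ofReal_integral_norm_sq_eq_lintegral (integrable _),
      ← ofReal_integral_norm_sq_eq_lintegral (integrable _), f.integral_norm_sq_fourier]
  rwa [SchwartzMap.fourier_coe] at plancherel

variable [MeasurableSpace E] [BorelSpace E] [FiniteDimensional ℝ E] {μ : Measure E}

theorem lintegral_lintegral_enorm_sq_partialFourier [SFinite μ] {v : E × X → ℂ}
    (hv : ContDiff ℝ ∞ v) (hvs : HasCompactSupport v) :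
    ∫⁻ ξ, ∫⁻ z, ‖partialFourier v ξ z‖ₑ ^ 2 ∂μ = ∫⁻ p, ‖v p‖ₑ ^ 2 ∂μ.prod volume := by
  have hm : Measurable fun q : X × E => ‖partialFourier v q.1 q.2‖ₑ ^ 2 :=
    (stronglyMeasurable_partialFourier hv.continuous).enorm.pow_const 2
  have hvm : Measurable fun p => ‖v p‖ₑ ^ 2 := hv.continuous.measurable.enorm.pow_const 2
  rw [lintegral_lintegral_swap hm.aemeasurable, lintegral_prod _ hvm.aemeasurable]
  simp_rw [lintegral_enorm_sq_partialFourier hv hvs]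

theorem integral_norm_sq_le_sum_of_partialFourier {ι : Type*} [Fintype ι] [SFinite μ]
    [IsFiniteMeasureOnCompacts μ] {v : E × X → ℂ} (hv : ContDiff ℝ ∞ v)
    (hvs : HasCompactSupport v) {w : ι → E × X → ℂ} (hw : ∀ j, ContDiff ℝ ∞ (w j))
    (hws : ∀ j, HasCompactSupport (w j))
    (h : ∀ ξ, ∫ z, ‖partialFourier v ξ z‖ ^ 2 ∂μ
      ≤ ∑ j, ∫ z, ‖partialFourier (w j) ξ z‖ ^ 2 ∂μ) :
    ∫ p, ‖v p‖ ^ 2 ∂μ.prod volume ≤ ∑ j, ∫ p, ‖w j p‖ ^ 2 ∂μ.prod volume := by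
  have ofReal_total {f : E × X → ℂ} (hf : ContDiff ℝ ∞ f) (hfs : HasCompactSupport f) :
      ENNReal.ofReal (∫ p, ‖f p‖ ^ 2 ∂μ.prod volume)
        = ∫⁻ ξ, ∫⁻ z, ‖partialFourier f ξ z‖ₑ ^ 2 ∂μ := by
    rw [lintegral_lintegral_enorm_sq_partialFourier hf hfs, ofReal_integral_norm_sq_eq_lintegral
      (integrable_norm_sq_of_hasCompactSupport hf.continuous hfs)]
  have ofReal_fibre {f : E × X → ℂ} (hf : ContDiff ℝ ∞ f) (hfs : HasCompactSupport f) (ξ : X) :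
      ENNReal.ofReal (∫ z, ‖partialFourier f ξ z‖ ^ 2 ∂μ)
        = ∫⁻ z, ‖partialFourier f ξ z‖ₑ ^ 2 ∂μ :=
    ofReal_integral_norm_sq_eq_lintegral <| integrable_norm_sq_of_hasCompactSupport
      (contDiff_partialFourier (m := 0) (hf.of_le (by simp)) hfs ξ).continuous
      (hasCompactSupport_partialFourier hfs ξ)
  have hm (j : ι) : Measurable fun ξ => ∫⁻ z, ‖partialFourier (w j) ξ z‖ₑ ^ 2 ∂μ :=
    ((stronglyMeasurable_partialFourier (hw j).continuous).enorm.pow_const 2).lintegral_prod_right'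
  rw [← ENNReal.ofReal_le_ofReal_iff (sum_nonneg fun j _ => integral_nonneg fun _ => by positivity),
    ENNReal.ofReal_sum_of_nonneg fun j _ => integral_nonneg fun _ => by positivity,
    ofReal_total hv hvs]
  simp_rw [fun j => ofReal_total (hw j) (hws j)]
  rw [← lintegral_finsetSum _ fun j _ => hm j]
  refine lintegral_mono fun ξ => ?_
  simp_rw [← ofReal_fibre hv hvs, fun j => (ofReal_fibre (hw j) (hws j) ξ).symm]
  rw [← ENNReal.ofReal_sum_of_nonneg fun j _ => integral_nonneg fun _ => by positivity]
  exact ENNReal.ofReal_le_ofReal (h ξ)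

end PartialFourier

section TangentialCauchyRiemann

variable {n d : ℕ} (H : Fin d → Matrix (Fin n) (Fin n) ℂ) (j : Fin n)

theorem contDiff_LbarQ {u : (Fin n → ℂ) × (Fin d → ℝ) → ℂ} (hu : ContDiff ℝ ∞ u) :
    ContDiff ℝ ∞ (LbarQ H j u) := by
  have (v : (Fin n → ℂ) × (Fin d → ℝ)) : ContDiff ℝ ∞ fun p => fderiv ℝ u p v :=
    (hu.fderiv_right (by simp)).clm_apply contDiff_const
  unfold LbarQ wbarQ dxQ
  fun_prop

theorem hasCompactSupport_LbarQ {u : (Fin n → ℂ) × (Fin d → ℝ) → ℂ} (hus : HasCompactSupport u) :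
    HasCompactSupport (LbarQ H j u) := by
  refine .intro (hus.fderiv ℝ).isCompact fun p hp => ?_
  simp [LbarQ, wbarQ, dxQ, image_eq_zero_of_notMem_tsupport hp]

variable (n d) in
/-- The identification of `ℂⁿ × ℝᵈ` carrying the Euclidean norm on `ℝᵈ`, as the Fourier transform
requires, with `ℂⁿ × ℝᵈ` carrying the supremum norm, as in the definition of `LbarQ`. -/
def ofLpSnd : ((Fin n → ℂ) × EuclideanSpace ℝ (Fin d)) ≃L[ℝ] (Fin n → ℂ) × (Fin d → ℝ) :=
  (ContinuousLinearEquiv.refl ℝ _).prodCongr (PiLp.continuousLinearEquiv 2 ℝ _)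

theorem integral_comp_ofLpSnd (μ : Measure (Fin n → ℂ)) [SFinite μ]
    (f : (Fin n → ℂ) × (Fin d → ℝ) → ℝ) :
    ∫ p, f (ofLpSnd n d p) ∂μ.prod volume = ∫ p, f p ∂μ.prod volume :=
  ((MeasurePreserving.id μ).prod (PiLp.volume_preserving_ofLp (Fin d))).integral_comp
    (ofLpSnd n d).toHomeomorph.measurableEmbedding f

theorem LbarQ_eq_sub_sum (u : (Fin n → ℂ) × (Fin d → ℝ) → ℂ) (p : (Fin n → ℂ) × (Fin d → ℝ)) :
    LbarQ H j u p = wbarQ j u p - I * ∑ ℓ, (p.1 ᵥ* H ℓ) j * dxQ ℓ u p := by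
  have (ℓ : Fin d) : (p.1 ᵥ* H ℓ) j = ∑ k, H ℓ k j * p.1 k := dotProduct_comm _ _
  simp only [LbarQ, this, sum_mul]

-- `-I * b = 1 / 2 * (2 * b.im + I * (-2 * b.re))` absorbs the `x`-part of `L̄_j` into the two real
-- directions of a Wirtinger derivative.
theorem LbarQ_comp_ofLpSnd (u : (Fin n → ℂ) × (Fin d → ℝ) → ℂ)
    (p : (Fin n → ℂ) × EuclideanSpace ℝ (Fin d)) :
    LbarQ H j u (ofLpSnd n d p)
      = wirtingerBar (Pi.single j 1, .toLp 2 fun ℓ => 2 * ((p.1 ᵥ* H ℓ) j).im)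
          (Pi.single j I, .toLp 2 fun ℓ => -2 * ((p.1 ᵥ* H ℓ) j).re) (u ∘ ofLpSnd n d) p := by
  have fderiv_comp (a : Fin n → ℂ) (x : Fin d → ℝ) :
      fderiv ℝ (u ∘ ofLpSnd n d) p (a, .toLp 2 x)
        = fderiv ℝ u (ofLpSnd n d p) (a, 0) + ∑ ℓ, (x ℓ : ℂ) * dxQ ℓ u (ofLpSnd n d p) := by
    have : ofLpSnd n d (a, .toLp 2 x)
        = (a, 0) + ∑ ℓ, x ℓ • ((0, Pi.single ℓ 1) : (Fin n → ℂ) × (Fin d → ℝ)) := by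
      ext k <;> simp [ofLpSnd, Prod.fst_sum, Prod.snd_sum, Finset.sum_apply, Pi.single_apply]
    rw [(ofLpSnd n d).comp_right_fderiv]
    simp only [ContinuousLinearMap.comp_apply, ContinuousLinearEquiv.coe_coe, this, map_add,
      map_sum, map_smul, real_smul, dxQ]
  have mul_term (b D : ℂ) : 1 / 2 * (((2 * b.im : ℝ) : ℂ) * D + I * (((-2 * b.re : ℝ) : ℂ) * D))
      = -(I * (b * D)) := by
    push_cast
    linear_combination -I * D * re_add_im b + b.im * D * I_sq
  rw [LbarQ_eq_sub_sum, show (ofLpSnd n d p).1 = p.1 from rfl, wbarQ, wirtingerBar, fderiv_comp,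
    fderiv_comp, mul_sum, sub_eq_add_neg, ← sum_neg_distrib]
  simp only [← mul_term, mul_add, sum_add_distrib, mul_sum]
  ring

theorem partialFourier_LbarQ_comp_ofLpSnd {u : (Fin n → ℂ) × (Fin d → ℝ) → ℂ}
    (hu : ContDiff ℝ 1 u) (hus : HasCompactSupport u) (ξ : EuclideanSpace ℝ (Fin d))
    (z : Fin n → ℂ) :
    partialFourier (LbarQ H j u ∘ ofLpSnd n d) ξ z
      = twistedBar (∑ ℓ, ((2 * Real.pi * ξ ℓ : ℝ) : ℂ) • H ℓ) j
          (partialFourier (u ∘ ofLpSnd n d) ξ) z := by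
  have hv : ContDiff ℝ 1 (u ∘ ofLpSnd n d) := hu.comp (ofLpSnd n d).contDiff
  have hvs : HasCompactSupport (u ∘ ofLpSnd n d) := hus.comp_homeomorph (ofLpSnd n d).toHomeomorph
  let b (ℓ : Fin d) : ℂ := (z ᵥ* H ℓ) j
  have symbol : Real.pi * I * (⟪(.toLp 2 fun ℓ => 2 * (b ℓ).im : EuclideanSpace ℝ (Fin d)), ξ⟫_ℝ
      + I * ⟪(.toLp 2 fun ℓ => -2 * (b ℓ).re : EuclideanSpace ℝ (Fin d)), ξ⟫_ℝ)
        = (z ᵥ* ∑ ℓ, ((2 * Real.pi * ξ ℓ : ℝ) : ℂ) • H ℓ) j := by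
    simp only [PiLp.inner_apply, RCLike.inner_apply, conj_trivial, ofReal_sum, ofReal_mul, mul_sum,
      ← sum_add_distrib, Matrix.vecMul_sum, Finset.sum_apply, Matrix.vecMul_smul, Pi.smul_apply,
      smul_eq_mul]
    refine sum_congr rfl fun ℓ _ => ?_
    rw [← re_add_im ((z ᵥ* H ℓ) j)]
    push_cast
    linear_combination -2 * Real.pi * ξ ℓ * (b ℓ).re * I_sq
  calc partialFourier (LbarQ H j u ∘ ofLpSnd n d) ξ z
      = partialFourier (wirtingerBar (Pi.single j 1, .toLp 2 fun ℓ => 2 * (b ℓ).im)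
          (Pi.single j I, .toLp 2 fun ℓ => -2 * (b ℓ).re) (u ∘ ofLpSnd n d)) ξ z := by
        simp only [partialFourier, Function.comp_apply, LbarQ_comp_ofLpSnd, b]
    _ = twistedBar (∑ ℓ, ((2 * Real.pi * ξ ℓ : ℝ) : ℂ) • H ℓ) j
          (partialFourier (u ∘ ofLpSnd n d) ξ) z := by
        rw [partialFourier_wirtingerBar hv hvs, symbol, twistedBar]

theorem quadratic_CR_function_estimate_general
    (hneg : ∀ ξ : Fin d → ℝ, ∃ c : Fin n → ℂ,
      c ≠ 0 ∧ (star c ⬝ᵥ (∑ ℓ, (ξ ℓ : ℂ) • H ℓ) *ᵥ c).re ≤ 0)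
    {u : (Fin n → ℂ) × (Fin d → ℝ) → ℂ} (hu : ContDiff ℝ ∞ u) (hus : HasCompactSupport u) :
    ∫ p, ‖u p‖ ^ 2 * wgtQ p ≤ ∑ j, ∫ p, ‖LbarQ H j u p‖ ^ 2 * wgtQ p := by
  let T := ofLpSnd n d
  have hT {f : (Fin n → ℂ) × (Fin d → ℝ) → ℂ} (hf : ContDiff ℝ ∞ f) : ContDiff ℝ ∞ (f ∘ T) :=
    hf.comp T.contDiff
  have hTs {f : (Fin n → ℂ) × (Fin d → ℝ) → ℂ} (hfs : HasCompactSupport f) :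
      HasCompactSupport (f ∘ T) := hfs.comp_homeomorph T.toHomeomorph
  have weighted (f : (Fin n → ℂ) × (Fin d → ℝ) → ℂ) : ∫ p, ‖f p‖ ^ 2 * wgtQ p
      = ∫ p, ‖(f ∘ T) p‖ ^ 2 ∂(expNormSqMeasure (Fin n)).prod volume := by
    exact ((integral_comp_ofLpSnd _ fun p => ‖f p‖ ^ 2).trans
      (integral_expNormSqMeasure_prod _ _)).symm
  simp_rw [weighted]
  refine integral_norm_sq_le_sum_of_partialFourier (hT hu) (hTs hus)
    (fun j => hT (contDiff_LbarQ H j hu)) (fun j => hTs (hasCompactSupport_LbarQ H j hus))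
    fun ξ => ?_
  simp_rw [T, partialFourier_LbarQ_comp_ofLpSnd H _ (hu.of_le (by simp)) hus]
  obtain ⟨c, hc0, hc⟩ := hneg fun ℓ => 2 * Real.pi * ξ ℓ
  exact integral_norm_sq_le_sum_integral_twistedBar hc0 hc
    (contDiff_partialFourier (m := 2) (contDiff_infty.1 (hT hu) 2) (hTs hus) ξ)
    (hasCompactSupport_partialFourier (hTs hus) ξ)

variable {H}

theorem TwoPseudoconcave.exists_re_dotProduct_nonpos [NeZero n] (hpc : TwoPseudoconcave H)
    (hH : ∀ ℓ, (H ℓ).IsHermitian) (ξ : Fin d → ℝ) :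
    ∃ c : Fin n → ℂ, c ≠ 0 ∧ (star c ⬝ᵥ (∑ ℓ, (ξ ℓ : ℂ) • H ℓ) *ᵥ c).re ≤ 0 := by
  by_cases hξ : ξ = 0
  · exact ⟨1, one_ne_zero, by simp [hξ]⟩
  have h : (∑ ℓ, (ξ ℓ : ℂ) • H ℓ).IsHermitian := by
    simp [Matrix.IsHermitian, Matrix.conjTranspose_sum, (hH _).eq]
  obtain ⟨i, hi⟩ := Finset.card_pos.1 (two_pos.trans_le (hpc ξ hξ h).2)
  refine ⟨h.eigenvectorBasis i, ?_, ?_⟩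
  · exact (WithLp.ofLp_eq_zero 2).not.2 (h.eigenvectorBasis.orthonormal.ne_zero i)
  · exact (h.eigenvalues_eq i).symm.trans_le (mem_filter.1 hi).2.le

end TangentialCauchyRiemann

theorem quadratic_CR_function_estimate (n d : ℕ) (hn : 4 ≤ n) (hd : 1 ≤ d)
    (H : Fin d → Matrix (Fin n) (Fin n) ℂ)
    (hH : ∀ ℓ, (H ℓ).IsHermitian) (hpc : TwoPseudoconcave H)
    (u : (Fin n → ℂ) × (Fin d → ℝ) → ℂ)
    (hu : ContDiff ℝ (⊤ : ℕ∞) u) (hucs : HasCompactSupport u) :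
    ∫ p : (Fin n → ℂ) × (Fin d → ℝ), ‖u p‖ ^ 2 * wgtQ p
      ≤ ∑ j, ∫ p : (Fin n → ℂ) × (Fin d → ℝ), ‖LbarQ H j u p‖ ^ 2 * wgtQ p :=
  have : NeZero n := ⟨by omega⟩
  quadratic_CR_function_estimate_general H (hpc.exists_re_dotProduct_nonpos hH) hu hucs
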